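/- Let n ≥ 3, let A be a real n×n matrix that is symmetric, has nonpositive off-diagonal entries, is irreducible, and satisfies A·𝟙 = 0, and let f ∈ ℝⁿ. For each index i, let x_i denote the unique vector with A x_i = fᵢ and x_i(i) = 0, and write x_{i j} := x_i(j). Then for every finite sequence of indices i₁, i₂, …, i_m (m ≥ 2), one has x_{i₁ i₂} + x_{i₂ i₃} + ⋯ + x_{i_m i₁} = x_{i₂ i₁} + x_{i₃ i₂} + ⋯ + x_{i₁ i_m}. -/

import Mathlib

/-!
It suffices to write `x i j - x j i = g j - g i` for some potential `g`, since the right-hand side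
telescopes around a cycle. Let `F = ∑ l, f l`. By symmetry of `A`, `x j ⬝ A (x i) = x i ⬝ A (x j)`,
which reads `F * (x i j - x j i) = x i ⬝ f - x j ⬝ f`; if `F ≠ 0`, this gives the potential
`g i = -(x i ⬝ f) / F`. If `F = 0`, all `x i` solve the same equation `A (x i) = f`, so they differ
by constants (the kernel of `A` consists of constant vectors, by the maximum principle
`eq_of_mulVec_eq_zero`), and then `x i j = y j - y i` where `y` is any one of them, so that
`g = 2 y` works.
-/

open Matrix

/-- Maximum principle: the kernel of an irreducible matrix with nonpositive off-diagonal entries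
and zero row sums consists of constant vectors. Irreducibility forces the set where `v` attains
its maximum to be everything. -/
lemma eq_of_mulVec_eq_zero {n : ℕ} (A : Matrix (Fin n) (Fin n) ℝ)
    (hoff : ∀ i j : Fin n, i ≠ j → A i j ≤ 0)
    (hirr : ∀ S : Finset (Fin n), S.Nonempty → S ≠ Finset.univ →
      ∃ i ∈ S, ∃ j ∉ S, A i j ≠ 0)
    (hone : A.mulVec (fun _ => (1 : ℝ)) = 0)
    (v : Fin n → ℝ) (hv : A.mulVec v = 0) (a b : Fin n) : v a = v b := by
  obtain ⟨k, -, hk⟩ := Finset.exists_max_image Finset.univ v ⟨a, Finset.mem_univ a⟩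
  have hmax : Finset.univ.filter (fun i => v i = v k) = Finset.univ := by
    by_contra hne
    obtain ⟨i, hi, j, hj, hA⟩ := hirr _ ⟨k, by simp⟩ hne
    simp only [Finset.mem_filter, Finset.mem_univ, true_and] at hi hj
    have h1 : ∑ l, A i l = 0 := by
      simpa [mulVec, dotProduct] using congrFun hone i
    have h2 : ∑ l, A i l * v l = 0 := by
      simpa [mulVec, dotProduct] using congrFun hv i
    have h3 : ∑ l, A i l * (v l - v k) = 0 := by
      simp only [mul_sub, Finset.sum_sub_distrib, ← Finset.sum_mul, h1, h2]
      simp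
    have h4 : ∀ l ∈ Finset.univ, 0 ≤ A i l * (v l - v k) := by
      intro l _
      by_cases hil : i = l
      · subst hil
        simp [hi]
      · exact mul_nonneg_of_nonpos_of_nonpos (hoff i l hil)
          (sub_nonpos.2 (hk l (Finset.mem_univ l)))
    have h5 := (Finset.sum_eq_zero_iff_of_nonneg h4).1 h3 j (Finset.mem_univ j)
    exact (mul_ne_zero hA (sub_ne_zero.2 hj)) h5
  have hall : ∀ i, v i = v k := fun i => by
    have := Finset.mem_univ i
    rw [← hmax] at this
    simpa using this
  rw [hall a, hall b]

lemma dotProduct_update_sub {n : ℕ} (w f : Fin n → ℝ) (i : Fin n) (c : ℝ) :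
    w ⬝ᵥ Function.update f i (f i - c) = w ⬝ᵥ f - c * w i := by
  have : Function.update f i (f i - c) = f - Pi.single i c := by
    ext l
    by_cases h : l = i
    · subst h
      simp
    · simp [h]
  rw [this, dotProduct_sub, dotProduct_single, mul_comm]

/-- The cyclic generalization of the Coppersmith–Tetali–Winkler
identity: for any finite sequence of indices `i₁, …, i_m` (`m ≥ 2`, here encoded
as `m + 2` indices), `x_{i₁ i₂} + x_{i₂ i₃} + ⋯ + x_{i_m i₁}
= x_{i₂ i₁} + x_{i₃ i₂} + ⋯ + x_{i₁ i_m}`, where `x i` is the unique solution of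
`A (x i) = fᵢ` with `x i i = 0`. -/
theorem stmt_5 (n : ℕ) (hn : 3 ≤ n) (A : Matrix (Fin n) (Fin n) ℝ)
    (hsym : A.IsSymm)
    (hoff : ∀ i j : Fin n, i ≠ j → A i j ≤ 0)
    (hirr : ∀ S : Finset (Fin n), S.Nonempty → S ≠ Finset.univ →
      ∃ i ∈ S, ∃ j ∉ S, A i j ≠ 0)
    (hone : A.mulVec (fun _ => (1 : ℝ)) = 0)
    (f : Fin n → ℝ) (x : Fin n → Fin n → ℝ)
    (hx : ∀ i : Fin n, A.mulVec (x i) = Function.update f i (f i - ∑ l, f l))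
    (hx0 : ∀ i : Fin n, x i i = 0)
    (m : ℕ) (idx : Fin (m + 2) → Fin n) :
    ∑ t : Fin (m + 2), x (idx t) (idx (t + 1)) =
      ∑ t : Fin (m + 2), x (idx (t + 1)) (idx t) := by
  suffices h : ∃ g : Fin n → ℝ, ∀ i j, x i j - x j i = g j - g i by
    obtain ⟨g, hg⟩ := h
    rw [← sub_eq_zero, ← Finset.sum_sub_distrib]
    simp only [hg, Finset.sum_sub_distrib]
    rw [sub_eq_zero]
    exact Equiv.sum_comp (Equiv.addRight (1 : Fin (m + 2))) (fun t => g (idx t))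
  by_cases hF : ∑ l, f l = 0
  · let y := x ⟨0, by omega⟩
    have key : ∀ i j, x i j = y j - y i := by
      intro i j
      have hker : A.mulVec (x i - y) = 0 := by
        rw [mulVec_sub, hx, hx]
        simp [hF]
      have := eq_of_mulVec_eq_zero A hoff hirr hone _ hker i j
      simp only [Pi.sub_apply, hx0] at this
      linarith
    exact ⟨fun i => 2 * y i, fun i j => by rw [key i j, key j i]; ring⟩
  · refine ⟨fun i => -(x i ⬝ᵥ f) / ∑ l, f l, fun i j => ?_⟩
    have hswap : x j ⬝ᵥ A.mulVec (x i) = x i ⬝ᵥ A.mulVec (x j) := by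
      rw [dotProduct_mulVec, ← mulVec_transpose, hsym.eq, dotProduct_comm]
    rw [hx, hx, dotProduct_update_sub, dotProduct_update_sub] at hswap
    field_simp
    linarith
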